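/- The function w = lim_{K→∞} u_K is a viscosity solution of F[w] = 0 in G with w = g on ∂G: for every smooth φ and every x_0 ∈ G at which φ − w attains a local maximum equal to zero one has F[φ](x_0) ≤ 0, and for every smooth φ and every x_0 ∈ G at which φ − w attains a local minimum equal to zero one has F[φ](x_0) ≥ 0. -/

import Mathlib

noncomputable section

open MeasureTheory Set Filter Topology
open scoped ENNReal NNReal

/-- Euclidean space `ℝ^d`. -/
abbrev E (d : ℕ) : Type := EuclideanSpace ℝ (Fin d)

/-- Euclidean norm of a vector given as `Fin d → ℝ`. -/
def vecNorm {d : ℕ} (v : Fin d → ℝ) : ℝ := Real.sqrt (∑ i, (v i) ^ 2)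

/-- Hilbert–Schmidt norm `‖σ‖² = tr σσ*` of a `d × d` matrix. -/
def matNorm {d : ℕ} (m : Fin d → Fin d → ℝ) : ℝ := Real.sqrt (∑ i, ∑ j, (m i j) ^ 2)

/-- `m ∈ S_δ`: `m` is symmetric and `δ|ξ|² ≤ m_{ij}ξ^iξ^j ≤ δ⁻¹|ξ|²` for all `ξ`. -/
def memSdelta {d : ℕ} (δ : ℝ) (m : Fin d → Fin d → ℝ) : Prop :=
  (∀ i j, m i j = m j i) ∧
  ∀ ξ : Fin d → ℝ,
    δ * (∑ i, (ξ i) ^ 2) ≤ (∑ i, ∑ j, m i j * ξ i * ξ j) ∧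
    (∑ i, ∑ j, m i j * ξ i * ξ j) ≤ δ⁻¹ * (∑ i, (ξ i) ^ 2)

/-- First partial derivative `D_i u(x)`. -/
def D1 {d : ℕ} (u : E d → ℝ) (x : E d) (i : Fin d) : ℝ :=
  fderiv ℝ u x (EuclideanSpace.single i 1)

/-- Second partial derivative `D_{ij} u(x)`. -/
def D2 {d : ℕ} (u : E d → ℝ) (x : E d) (i j : Fin d) : ℝ :=
  fderiv ℝ (fun y => fderiv ℝ u y (EuclideanSpace.single j 1)) x (EuclideanSpace.single i 1)

/-- Third partial derivative `D_{ijk} u(x)`. -/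
def D3 {d : ℕ} (u : E d → ℝ) (x : E d) (i j k : Fin d) : ℝ :=
  fderiv ℝ (fun y => D2 u y j k) x (EuclideanSpace.single i 1)

/-- `L^{αβ}u(x) = a^{αβ}_{ij}(x) D_{ij}u(x) + b^{αβ}_i(x) D_i u(x) - c^{αβ}(x) u(x)`. -/
def Lop {d : ℕ} {A B : Type} (a : A → B → E d → Fin d → Fin d → ℝ)
    (b : A → B → E d → Fin d → ℝ) (c : A → B → E d → ℝ)
    (α : A) (β : B) (u : E d → ℝ) (x : E d) : ℝ :=
  (∑ i, ∑ j, a α β x i j * D2 u x i j) + (∑ i, b α β x i * D1 u x i) - c α β x * u x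

/-- The Isaacs operator `F[u](x) = sup_α inf_β [L^{αβ}u(x) + f^{αβ}(x)]`. -/
def Fop {d : ℕ} {A B : Type} (a : A → B → E d → Fin d → Fin d → ℝ)
    (b : A → B → E d → Fin d → ℝ) (c f : A → B → E d → ℝ) (u : E d → ℝ) (x : E d) : ℝ :=
  ⨆ α : A, ⨅ β : B, (Lop a b c α β u x + f α β x)

/-- `P[u](x) = P(D_{ij}u(x), D_i u(x), u(x))`. -/
def Pop {d : ℕ} (P : (Fin d → Fin d → ℝ) → (Fin d → ℝ) → ℝ → ℝ) (u : E d → ℝ) (x : E d) : ℝ :=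
  P (fun i j => D2 u x i j) (fun i => D1 u x i) (u x)

/-- Assumption 2.1 of the paper on the coefficients `a, b, c, f`
(with Hölder exponent `γ` for `a` and modulus `ω` for `b, c, f`). -/
def CoeffAssump {d : ℕ} {A B : Type} [MetricSpace A] [MetricSpace B]
    (δ K0 γ : ℝ) (ω : ℝ → ℝ)
    (a : A → B → E d → Fin d → Fin d → ℝ) (b : A → B → E d → Fin d → ℝ)
    (c f : A → B → E d → ℝ) : Prop :=
  (∀ α β x, memSdelta δ (a α β x)) ∧
  (∀ α β x, matNorm (a α β x) ≤ K0) ∧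
  (∀ α β x, vecNorm (b α β x) ≤ K0) ∧
  (∀ α β x, 0 ≤ c α β x ∧ c α β x ≤ K0) ∧
  (∀ α β x, |f α β x| ≤ K0) ∧
  (∀ α x, Continuous (fun β => a α β x) ∧ Continuous (fun β => b α β x) ∧
     Continuous (fun β => c α β x) ∧ Continuous (fun β => f α β x)) ∧
  (∀ (x : E d) (α₀ : A), ∀ ε : ℝ, 0 < ε → ∃ η : ℝ, 0 < η ∧ ∀ α : A, dist α α₀ < η → ∀ β : B,
     matNorm (fun i j => a α β x i j - a α₀ β x i j) < ε ∧
     vecNorm (fun i => b α β x i - b α₀ β x i) < ε ∧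
     |c α β x - c α₀ β x| < ε ∧ |f α β x - f α₀ β x| < ε) ∧
  (∀ α β x y, matNorm (fun i j => a α β x i j - a α β y i j) ≤ K0 * ‖x - y‖ ^ γ) ∧
  (∀ α β x y, vecNorm (fun i => b α β x i - b α β y i) ≤ K0 * ω ‖x - y‖) ∧
  (∀ α β x y, |c α β x - c α β y| ≤ K0 * ω ‖x - y‖) ∧
  (∀ α β x y, |f α β x - f α β y| ≤ K0 * ω ‖x - y‖)

/-- `ω` is a modulus of continuity with `t^χ ≤ ω(t)` on `[0,1]` (Remark 2.1). -/
def ModulusAssump (χ : ℝ) (ω : ℝ → ℝ) : Prop :=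
  Continuous ω ∧ MonotoneOn ω (Set.Ici 0) ∧ ω 0 = 0 ∧
  ∀ t : ℝ, t ∈ Set.Icc (0:ℝ) 1 → t ^ χ ≤ ω t

/-- `g ∈ C^{1,1}(ℝ^d)` with `‖g‖_{C^{1,1}} ≤ K0`. -/
def C11Bound {d : ℕ} (K0 : ℝ) (g : E d → ℝ) : Prop :=
  Differentiable ℝ g ∧ (∀ x, |g x| ≤ K0) ∧
  (∀ x y, |g x - g y| ≤ K0 * ‖x - y‖) ∧
  (∀ x y, ‖fderiv ℝ g x - fderiv ℝ g y‖ ≤ K0 * ‖x - y‖)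

/-- Properties of the special function `P(u_{ij}, u_i, u)` constructed in Krylov
[Methods Appl. Anal. 19 (2012)]: convex, positively homogeneous of degree one,
Lipschitz, with `(P_{u_{ij}}) ∈ S_δ̂`, `|(P_{u_i})| ≤ K₁`, `0 > P_u ≥ -K₁`
at any point of differentiability. -/
def PAssump {d : ℕ} (δhat K1 : ℝ)
    (P : (Fin d → Fin d → ℝ) → (Fin d → ℝ) → ℝ → ℝ) : Prop :=
  ConvexOn ℝ Set.univ (fun p : (Fin d → Fin d → ℝ) × (Fin d → ℝ) × ℝ => P p.1 p.2.1 p.2.2) ∧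
  (∀ t : ℝ, 0 ≤ t → ∀ m v r, P (t • m) (t • v) (t * r) = t * P m v r) ∧
  (∃ C : NNReal, LipschitzWith C
    (fun p : (Fin d → Fin d → ℝ) × (Fin d → ℝ) × ℝ => P p.1 p.2.1 p.2.2)) ∧
  (∀ p : (Fin d → Fin d → ℝ) × (Fin d → ℝ) × ℝ,
    DifferentiableAt ℝ (fun q : (Fin d → Fin d → ℝ) × (Fin d → ℝ) × ℝ => P q.1 q.2.1 q.2.2) p →
    memSdelta δhat (fun i j =>
      fderiv ℝ (fun q : (Fin d → Fin d → ℝ) × (Fin d → ℝ) × ℝ => P q.1 q.2.1 q.2.2) p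
        (Pi.single i (Pi.single j (1:ℝ)), 0, 0)) ∧
    vecNorm (fun i =>
      fderiv ℝ (fun q : (Fin d → Fin d → ℝ) × (Fin d → ℝ) × ℝ => P q.1 q.2.1 q.2.2) p
        (0, Pi.single i (1:ℝ), 0)) ≤ K1 ∧
    fderiv ℝ (fun q : (Fin d → Fin d → ℝ) × (Fin d → ℝ) × ℝ => P q.1 q.2.1 q.2.2) p (0, 0, 1) < 0 ∧
    -K1 ≤ fderiv ℝ (fun q : (Fin d → Fin d → ℝ) × (Fin d → ℝ) × ℝ => P q.1 q.2.1 q.2.2) p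
      (0, 0, 1))

/-- A bounded domain of class `C²` (described by a global `C²` defining function
with nonvanishing gradient on the boundary). -/
def IsC2Domain {d : ℕ} (G : Set (E d)) : Prop :=
  IsOpen G ∧ Bornology.IsBounded G ∧ G.Nonempty ∧ IsConnected G ∧
  ∃ ρ : E d → ℝ, ContDiff ℝ 2 ρ ∧ G = {x | ρ x < 0} ∧ ∀ x ∈ frontier G, fderiv ℝ ρ x ≠ 0

/-- The complete standing hypotheses (Assumption 2.1 etc.) of the paper. -/
def Setting {d : ℕ} {A B : Type} [MetricSpace A] [MetricSpace B]
    (δ K0 χ γ δhat K1 : ℝ) (ω : ℝ → ℝ)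
    (a : A → B → E d → Fin d → Fin d → ℝ) (b : A → B → E d → Fin d → ℝ)
    (c f : A → B → E d → ℝ) (G : Set (E d)) (g : E d → ℝ)
    (P : (Fin d → Fin d → ℝ) → (Fin d → ℝ) → ℝ → ℝ) : Prop :=
  1 ≤ d ∧ 0 < δ ∧ δ < 1 ∧ 0 ≤ K0 ∧ 0 < χ ∧ χ < 1 ∧
  γ = (4 - 3 * χ) / (8 - 4 * χ) ∧ 0 < δhat ∧ δhat < δ ∧ K0 ≤ K1 ∧
  Nonempty A ∧ Nonempty B ∧
  TopologicalSpace.SeparableSpace A ∧ TopologicalSpace.SeparableSpace B ∧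
  CoeffAssump δ K0 γ ω a b c f ∧ IsC2Domain G ∧ C11Bound K0 g ∧ PAssump δhat K1 P

/-- `u` is a solution of `max(F[u], P[u] - K) = 0` in `G` of class
`C^{1,1}_{loc}(G) ∩ C(Ḡ)` with boundary data `g` (the equation holding at almost
every point, as the second derivatives of a `C^{1,1}_{loc}` function exist a.e.). -/
def IsUSol {d : ℕ} {A B : Type} (a : A → B → E d → Fin d → Fin d → ℝ)
    (b : A → B → E d → Fin d → ℝ) (c f : A → B → E d → ℝ)
    (G : Set (E d)) (g : E d → ℝ)
    (P : (Fin d → Fin d → ℝ) → (Fin d → ℝ) → ℝ → ℝ) (K : ℝ) (u : E d → ℝ) : Prop :=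
  ContinuousOn u (closure G) ∧ Set.EqOn u g (frontier G) ∧
  DifferentiableOn ℝ u G ∧
  (∀ x ∈ G, ∃ r : ℝ, 0 < r ∧ Metric.ball x r ⊆ G ∧
     ∃ C : NNReal, LipschitzOnWith C (fderiv ℝ u) (Metric.ball x r)) ∧
  (∀ᵐ x ∂(volume : Measure (E d)), x ∈ G →
     max (Fop a b c f u x) (Pop P u x - K) = 0)

/-- `v` is a solution of `min(F[v], -P[-v] + K) = 0` in `G` of class
`C^{1,1}_{loc}(G) ∩ C(Ḡ)` with boundary data `g`. -/
def IsVSol {d : ℕ} {A B : Type} (a : A → B → E d → Fin d → Fin d → ℝ)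
    (b : A → B → E d → Fin d → ℝ) (c f : A → B → E d → ℝ)
    (G : Set (E d)) (g : E d → ℝ)
    (P : (Fin d → Fin d → ℝ) → (Fin d → ℝ) → ℝ → ℝ) (K : ℝ) (v : E d → ℝ) : Prop :=
  ContinuousOn v (closure G) ∧ Set.EqOn v g (frontier G) ∧
  DifferentiableOn ℝ v G ∧
  (∀ x ∈ G, ∃ r : ℝ, 0 < r ∧ Metric.ball x r ⊆ G ∧
     ∃ C : NNReal, LipschitzOnWith C (fderiv ℝ v) (Metric.ball x r)) ∧
  (∀ᵐ x ∂(volume : Measure (E d)), x ∈ G →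
     min (Fop a b c f v x) (-(Pop P (fun y => -(v y)) x) + K) = 0)

/-- `G_ε = {x ∈ G : dist(x, ∂G) > ε}`. -/
def Gshrink {d : ℕ} (G : Set (E d)) (ε : ℝ) : Set (E d) :=
  {x ∈ G | ε < Metric.infDist x (frontier G)}

/-- `u ∈ C^{1+χ}(Q)` with `‖u‖_{C^{1+χ}(Q)} ≤ Cb` (stated through the three
constituent quantities of the norm). -/
def HolderBound {d : ℕ} (χ : ℝ) (Q : Set (E d)) (u : E d → ℝ) (Cb : ℝ) : Prop :=
  (∀ x ∈ Q, DifferentiableAt ℝ u x) ∧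
  (∀ x ∈ Q, |u x| ≤ Cb) ∧
  (∀ x ∈ Q, ∀ y ∈ Q, |u x - u y| ≤ Cb * ‖x - y‖) ∧
  (∀ x ∈ Q, ∀ y ∈ Q, vecNorm (fun i => D1 u x i - D1 u y i) ≤ Cb * ‖x - y‖ ^ χ)

/-- `w` is a (continuous) viscosity solution of `F[w] = 0` in `G` with `w = g` on `∂G`. -/
def ViscositySolution {d : ℕ} {A B : Type} (a : A → B → E d → Fin d → Fin d → ℝ)
    (b : A → B → E d → Fin d → ℝ) (c f : A → B → E d → ℝ)
    (G : Set (E d)) (g : E d → ℝ) (w : E d → ℝ) : Prop :=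
  ContinuousOn w (closure G) ∧ Set.EqOn w g (frontier G) ∧
  (∀ φ : E d → ℝ, ContDiff ℝ (⊤ : ℕ∞) φ → ∀ x0 ∈ G,
     IsLocalMax (fun x => φ x - w x) x0 → φ x0 - w x0 = 0 → Fop a b c f φ x0 ≤ 0) ∧
  (∀ φ : E d → ℝ, ContDiff ℝ (⊤ : ℕ∞) φ → ∀ x0 ∈ G,
     IsLocalMin (fun x => φ x - w x) x0 → φ x0 - w x0 = 0 → 0 ≤ Fop a b c f φ x0)

/-!
Let `φ - w` have a local maximum at `x₀`, made strict by subtracting `e ‖x - x₀‖²`. For large `K`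
the function `φ - u_K` still has interior maxima near `x₀`, and so does each of its tilts by a small
linear functional. Since `u_K` is `C^{1,1}_loc`, the gradient map of `φ - u_K` is locally Lipschitz
and maps null sets to null sets; hence some small tilt has its maximum at a point where `u_K` is
twice differentiable and satisfies its equation (Jensen's argument, with no need for the
Alexandrov theorem). There `D²φ ≤ D²u_K`, the gradients and values almost agree, and
`F[u_K] ≤ 0`, so ellipticity and continuity of `F` give `F[φ](x₀) ≤ 0` in the limit.

At a local minimum the same construction bounds `F[u_K]` and `P[u_K]` from above by the values of
`F` and `P` at jets close to that of `φ`. So `P[u_K] - K < 0` for large `K`, the equation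
reduces to `F[u_K] = 0`, and `F[φ](x₀) ≥ 0`. Ellipticity of `P` follows from its convexity and the
sign of its gradient at points of differentiability, which are dense.
-/

section NullSets

variable {V W : Type*} [NormedAddCommGroup V] [NormedSpace ℝ V] [FiniteDimensional ℝ V]
  [MeasurableSpace V] [BorelSpace V] [NormedAddCommGroup W] [NormedSpace ℝ W]
  [FiniteDimensional ℝ W]

theorem addHaar_image_eq_zero_of_lipschitzOnWith [MeasurableSpace W] [BorelSpace W]
    (hdim : Module.finrank ℝ V = Module.finrank ℝ W) {μ : Measure V} [μ.IsAddHaarMeasure]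
    {ν : Measure W} [ν.IsAddHaarMeasure] {T : V → W} {s : Set V} {C : ℝ≥0}
    (hT : LipschitzOnWith C T s) (hs : μ s = 0) : ν (T '' s) = 0 := by
  have hV : (Measure.hausdorffMeasure (Module.finrank ℝ V) : Measure V).IsAddHaarMeasure :=
    isAddHaarMeasure_hausdorffMeasure
  have hW : (Measure.hausdorffMeasure (Module.finrank ℝ V) : Measure W).IsAddHaarMeasure :=
    hdim ▸ isAddHaarMeasure_hausdorffMeasure
  have hsH : Measure.hausdorffMeasure (Module.finrank ℝ V) s = 0 :=
    Measure.absolutelyContinuous_isAddHaarMeasure _ μ hs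
  have himage := hT.hausdorffMeasure_image_le (Nat.cast_nonneg (Module.finrank ℝ V))
  rw [hsH, mul_zero] at himage
  exact Measure.absolutelyContinuous_isAddHaarMeasure ν _ (nonpos_iff_eq_zero.mp himage)

theorem addHaar_image_eq_zero_of_locallyLipschitzOn [MeasurableSpace W] [BorelSpace W]
    (hdim : Module.finrank ℝ V = Module.finrank ℝ W) {μ : Measure V} [μ.IsAddHaarMeasure]
    {ν : Measure W} [ν.IsAddHaarMeasure] {T : V → W} {s : Set V}
    (hT : LocallyLipschitzOn s T) (hs : μ s = 0) : ν (T '' s) = 0 := by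
  choose! C t ht hC using fun x (hx : x ∈ s) => hT hx
  obtain ⟨I, hIs, hIc, hcov⟩ := TopologicalSpace.countable_cover_nhdsWithin ht
  have hsub : T '' s ⊆ ⋃ x ∈ I, T '' (s ∩ t x) := by
    rw [← image_iUnion₂, ← inter_iUnion₂]
    exact image_mono (subset_inter subset_rfl hcov)
  refine measure_mono_null hsub ((measure_biUnion_null_iff hIc).2 fun x hx => ?_)
  exact addHaar_image_eq_zero_of_lipschitzOnWith hdim ((hC x (hIs hx)).mono inter_subset_right)
    (measure_mono_null inter_subset_left hs)

theorem ae_differentiableAt_of_locallyLipschitzOn {μ : Measure V} [μ.IsAddHaarMeasure]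
    {T : V → W} {G : Set V} (hG : IsOpen G) (hT : LocallyLipschitzOn G T) :
    ∀ᵐ x ∂μ, x ∈ G → DifferentiableAt ℝ T x := by
  have hnull : μ {x ∈ G | ¬ DifferentiableAt ℝ T x} = 0 := by
    refine measure_null_of_locally_null _ fun x hx => ?_
    obtain ⟨C, t, ht, hC⟩ := hT hx.1
    rw [hG.nhdsWithin_eq hx.1] at ht
    refine ⟨_, inter_mem_nhdsWithin _ (interior_mem_nhds.2 ht), ?_⟩
    refine measure_mono_null ?_ (ae_iff.1 (hC.ae_differentiableWithinAt_of_mem (μ := μ)))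
    rintro y ⟨hy, hyt⟩ hdiff
    exact hy.2 ((hdiff (interior_subset hyt)).differentiableAt (mem_interior_iff_mem_nhds.1 hyt))
  rw [ae_iff]
  simpa only [Classical.not_imp] using hnull

end NullSets

section SecondOrderCondition

theorem deriv_deriv_nonpos_of_isLocalMax {h : ℝ → ℝ} {t : ℝ} (hmax : IsLocalMax h t)
    (hcont : ContinuousAt h t) : deriv (deriv h) t ≤ 0 := by
  by_contra! hpos
  have hmin := isLocalMin_of_deriv_deriv_pos hpos hmax.deriv_eq_zero hcont
  have hconst : h =ᶠ[𝓝 t] fun _ => h t := by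
    filter_upwards [hmax, hmin] with s hle hge using le_antisymm hle hge
  have hzero : deriv (deriv h) t = 0 := by simp [hconst.deriv.deriv_eq]
  exact hpos.ne' hzero

theorem fderiv_fderiv_apply_self_nonpos_of_isLocalMax {V : Type*} [NormedAddCommGroup V]
    [NormedSpace ℝ V] {h : V → ℝ} {x : V} (hdiff : ∀ᶠ y in 𝓝 x, DifferentiableAt ℝ h y)
    (hdiff2 : DifferentiableAt ℝ (fderiv ℝ h) x) (hmax : IsLocalMax h x) (ξ : V) :
    fderiv ℝ (fderiv ℝ h) x ξ ξ ≤ 0 := by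
  let line : ℝ → V := fun t => x + t • ξ
  have hline (t : ℝ) : HasDerivAt line ξ t := by
    simpa only [one_smul, id] using ((hasDerivAt_id t).smul_const ξ).const_add x
  have hline0 : line 0 = x := by simp [line]
  have htendsto : Tendsto line (𝓝 0) (𝓝 x) := by
    simpa only [hline0] using (hline 0).continuousAt.tendsto
  have hderiv : deriv (h ∘ line) =ᶠ[𝓝 0] fun t => fderiv ℝ h (line t) ξ := by
    filter_upwards [htendsto.eventually hdiff] with t ht
    exact (ht.hasFDerivAt.comp_hasDerivAt t (hline t)).deriv
  have hderiv2 : deriv (deriv (h ∘ line)) 0 = fderiv ℝ (fderiv ℝ h) x ξ ξ := by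
    rw [hderiv.deriv_eq]
    have hgrad : HasDerivAt (fun t => fderiv ℝ h (line t)) (fderiv ℝ (fderiv ℝ h) x ξ) 0 :=
      hdiff2.hasFDerivAt.comp_hasDerivAt_of_eq 0 (hline 0) hline0.symm
    simpa using (hgrad.clm_apply (hasDerivAt_const (0 : ℝ) ξ)).deriv
  have hmax0 : IsLocalMax (h ∘ line) 0 := by
    filter_upwards [htendsto.eventually hmax] with t ht
    simpa only [Function.comp_apply, hline0] using ht
  have hcont : ContinuousAt (h ∘ line) 0 :=
    hdiff.self_of_nhds.continuousAt.comp_of_eq (hline 0).continuousAt hline0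
  exact hderiv2 ▸ deriv_deriv_nonpos_of_isLocalMax hmax0 hcont

end SecondOrderCondition

section C11

variable {V : Type*} [NormedAddCommGroup V] [NormedSpace ℝ V]

theorem differentiable_fderiv_of_contDiff_two {u : V → ℝ} (hu : ContDiff ℝ 2 u) :
    Differentiable ℝ (fderiv ℝ u) :=
  (hu.fderiv_right (m := 1) one_add_one_eq_two.le).differentiable one_ne_zero

/-- `u` is of class `C^{1,1}_{loc}` on `G`; meant for open `G`, so that `fderiv` is the derivative
of `u` inside `G`. -/
structure IsC11LocOn (u : V → ℝ) (G : Set V) : Prop where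
  differentiableOn : DifferentiableOn ℝ u G
  locallyLipschitzOn_fderiv : LocallyLipschitzOn G (fderiv ℝ u)

theorem isC11LocOn_of_contDiff {u : V → ℝ} {G : Set V} (hu : ContDiff ℝ 2 u) :
    IsC11LocOn u G where
  differentiableOn := (hu.differentiable two_ne_zero).differentiableOn
  locallyLipschitzOn_fderiv :=
    (hu.fderiv_right (m := 1) one_add_one_eq_two.le).locallyLipschitz.locallyLipschitzOn

namespace IsC11LocOn

variable {u v : V → ℝ} {G : Set V}

protected theorem neg (hu : IsC11LocOn u G) : IsC11LocOn (fun x => -u x) G where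
  differentiableOn := hu.differentiableOn.neg
  locallyLipschitzOn_fderiv := by
    have hfderiv : (fderiv ℝ fun x => -u x) = -fderiv ℝ u := funext fun _ => fderiv_fun_neg
    exact hfderiv ▸ hu.locallyLipschitzOn_fderiv.neg

theorem fderiv_sub (hu : IsC11LocOn u G) (hv : IsC11LocOn v G) (hG : IsOpen G) :
    EqOn (fderiv ℝ fun x => u x - v x) (fun x => fderiv ℝ u x - fderiv ℝ v x) G := fun _ hx =>
  fderiv_fun_sub (hu.differentiableOn.differentiableAt (hG.mem_nhds hx))
    (hv.differentiableOn.differentiableAt (hG.mem_nhds hx))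

protected theorem sub (hu : IsC11LocOn u G) (hv : IsC11LocOn v G) (hG : IsOpen G) :
    IsC11LocOn (fun x => u x - v x) G where
  differentiableOn := hu.differentiableOn.sub hv.differentiableOn
  locallyLipschitzOn_fderiv x hx := by
    obtain ⟨C, t, ht, hC⟩ := (hu.locallyLipschitzOn_fderiv.sub hv.locallyLipschitzOn_fderiv) hx
    refine ⟨C, t ∩ G, inter_mem ht self_mem_nhdsWithin, fun y hy z hz => ?_⟩
    rw [hu.fderiv_sub hv hG hy.2, hu.fderiv_sub hv hG hz.2]
    exact hC hy.1 hz.1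

end IsC11LocOn

end C11

section Jensen

variable {V : Type*} [NormedAddCommGroup V] [NormedSpace ℝ V] [FiniteDimensional ℝ V]
  {G : Set V} {x₀ : V}

theorem exists_isLocalMax_sub_clm_of_sphere_le {h : V → ℝ} {r M : ℝ} (hr : 0 < r)
    (hcont : ContinuousOn h (Metric.closedBall x₀ r)) (hM : ∀ x ∈ Metric.sphere x₀ r, h x ≤ M)
    {p : V →L[ℝ] ℝ} (hp : ‖p‖ * r < h x₀ - M) :
    ∃ x ∈ Metric.ball x₀ r, IsLocalMax (fun y => h y - p y) x := by
  have : ProperSpace V := FiniteDimensional.proper_real V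
  refine (isCompact_closedBall x₀ r).exists_isLocalMax_mem_open Metric.ball_subset_closedBall
    (hcont.sub p.continuous.continuousOn) (Metric.mem_closedBall_self hr.le) (fun x hx => ?_)
    Metric.isOpen_ball
  rw [Metric.closedBall_sdiff_ball] at hx
  have hslope : p (x₀ - x) ≤ ‖p‖ * r := by
    simpa only [norm_sub_rev x₀, mem_sphere_iff_norm.1 hx] using
      (le_abs_self _).trans (p.le_opNorm (x₀ - x))
  rw [map_sub] at hslope
  linarith [hM x hx]

theorem exists_closedBall_subset_and_sphere_le_neg {k : V → ℝ} {U : Set V} (hU : U ∈ 𝓝 x₀)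
    (hk : ContinuousOn k U) (hneg : ∀ᶠ x in 𝓝[≠] x₀, k x < 0) :
    ∃ r > 0, Metric.closedBall x₀ r ⊆ U ∧ ∃ m > 0, ∀ x ∈ Metric.sphere x₀ r, k x ≤ -m := by
  have : ProperSpace V := FiniteDimensional.proper_real V
  obtain ⟨r, hr, hball⟩ := Metric.nhds_basis_closedBall.mem_iff.1
    (inter_mem hU (eventually_nhdsWithin_iff.1 hneg))
  have hsphere : ∀ x ∈ Metric.sphere x₀ r, 0 < -k x := fun x hx =>
    neg_pos.2 ((hball (Metric.sphere_subset_closedBall hx)).2 (Metric.ne_of_mem_sphere hx hr.ne'))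
  have hcont : ContinuousOn (fun x => -k x) (Metric.sphere x₀ r) :=
    (hk.mono fun x hx => (hball (Metric.sphere_subset_closedBall hx)).1).neg
  obtain ⟨m, hm, hle⟩ := (isCompact_sphere x₀ r).exists_forall_le' hcont hsphere
  exact ⟨r, hr, fun x hx => (hball hx).1, m, hm, fun x hx => le_neg_of_le_neg (hle x hx)⟩

variable [MeasurableSpace V] [BorelSpace V] {μ : Measure V} [μ.IsAddHaarMeasure]

-- All small slopes are attained as gradients at interior maxima of tilts of `h`, while the
-- gradient maps a null set to a null set of slopes, so almost every small slope is attained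
-- at a point where `Q` and twice differentiability hold.
theorem IsC11LocOn.exists_mem_ball_fderiv_fderiv_nonpos {h : V → ℝ} {r M ρ : ℝ} {Q : V → Prop}
    (hh : IsC11LocOn h G) (hG : IsOpen G) (hr : 0 < r) (hball : Metric.closedBall x₀ r ⊆ G)
    (hM : ∀ x ∈ Metric.sphere x₀ r, h x ≤ M) (hx₀ : M < h x₀)
    (hQ : ∀ᵐ x ∂μ, x ∈ G → Q x) (hρ : 0 < ρ) :
    ∃ x ∈ Metric.ball x₀ r, Q x ∧ DifferentiableAt ℝ (fderiv ℝ h) x ∧ ‖fderiv ℝ h x‖ < ρ ∧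
      ∀ ξ, fderiv ℝ (fderiv ℝ h) x ξ ξ ≤ 0 := by
  let good : Set V := {x | Q x ∧ DifferentiableAt ℝ (fderiv ℝ h) x}
  have hbad : μ (G \ good) = 0 := by
    have hae : ∀ᵐ x ∂μ, x ∈ G → x ∈ good := by
      filter_upwards [hQ, ae_differentiableAt_of_locallyLipschitzOn hG
        hh.locallyLipschitzOn_fderiv] with x hx hx' hxG using ⟨hx hxG, hx' hxG⟩
    refine measure_mono_null ?_ (ae_iff.1 hae)
    exact fun x hx himp => hx.2 (himp hx.1)
  have hdim : Module.finrank ℝ V = Module.finrank ℝ (V →L[ℝ] ℝ) :=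
    Subspace.dual_finrank_eq.symm.trans LinearMap.toContinuousLinearMap.finrank_eq
  have hslopes : (Measure.addHaar : Measure (V →L[ℝ] ℝ)) (fderiv ℝ h '' (G \ good)) = 0 :=
    addHaar_image_eq_zero_of_locallyLipschitzOn hdim
      (hh.locallyLipschitzOn_fderiv.mono sdiff_subset) hbad
  obtain ⟨p, hpball, hp⟩ : ∃ p ∈ Metric.ball 0 (min ρ ((h x₀ - M) / r)),
      p ∉ fderiv ℝ h '' (G \ good) := by
    by_contra! hsub
    refine (Metric.measure_ball_pos Measure.addHaar _ ?_).ne' (measure_mono_null hsub hslopes)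
    exact lt_min hρ (div_pos (sub_pos.2 hx₀) hr)
  rw [mem_ball_zero_iff, lt_min_iff, lt_div_iff₀ hr] at hpball
  obtain ⟨x, hx, hmax⟩ := exists_isLocalMax_sub_clm_of_sphere_le hr
    (hh.differentiableOn.continuousOn.mono hball) hM hpball.2
  have hxG : x ∈ G := hball (Metric.ball_subset_closedBall hx)
  have htilt : ∀ y ∈ G, HasFDerivAt (fun y => h y - p y) (fderiv ℝ h y - p) y := fun y hy =>
    (hh.differentiableOn.differentiableAt (hG.mem_nhds hy)).hasFDerivAt.sub p.hasFDerivAt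
  have hgrad : fderiv ℝ h x = p := sub_eq_zero.1 (hmax.hasFDerivAt_eq_zero (htilt x hxG))
  obtain ⟨hxQ, hx2⟩ : x ∈ good := by_contra fun hxgood => hp ⟨x, ⟨hxG, hxgood⟩, hgrad⟩
  have htilt2 : HasFDerivAt (fderiv ℝ fun y => h y - p y) (fderiv ℝ (fderiv ℝ h) x) x :=
    (hx2.hasFDerivAt.sub_const p).congr_of_eventuallyEq <| by
      filter_upwards [hG.mem_nhds hxG] with y hy using (htilt y hy).fderiv
  refine ⟨x, hx, hxQ, hx2, hgrad ▸ hpball.1, fun ξ => htilt2.fderiv ▸ ?_⟩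
  refine fderiv_fderiv_apply_self_nonpos_of_isLocalMax ?_ htilt2.differentiableAt hmax ξ
  filter_upwards [hG.mem_nhds hxG] with y hy using (htilt y hy).differentiableAt

theorem eventually_exists_contact_of_strict_max {ι : Type*} {l : Filter ι} {u : ι → V → ℝ}
    {w ψ : V → ℝ} {U : Set V} {ρ : ℝ} (hG : IsOpen G) (hx₀ : x₀ ∈ G)
    (hu : TendstoUniformlyOn u w l G) (hw : ContinuousOn w G) (hψ : ContDiff ℝ 2 ψ)
    (hstrict : ∀ᶠ x in 𝓝[≠] x₀, ψ x - w x < 0) (heq : ψ x₀ - w x₀ = 0)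
    (hU : U ∈ 𝓝 x₀) (hρ : 0 < ρ) :
    ∀ᶠ i in l, IsC11LocOn (u i) G → ∀ Q : V → Prop, (∀ᵐ x ∂μ, x ∈ G → Q x) →
      ∃ x ∈ U, Q x ∧ DifferentiableAt ℝ (fderiv ℝ (u i)) x ∧ |ψ x - u i x| < ρ ∧
        ‖fderiv ℝ ψ x - fderiv ℝ (u i) x‖ < ρ ∧
        ∀ ξ, fderiv ℝ (fderiv ℝ ψ) x ξ ξ ≤ fderiv ℝ (fderiv ℝ (u i)) x ξ ξ := by
  have hcont : ContinuousOn (fun x => ψ x - w x) G := hψ.continuous.continuousOn.sub hw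
  have hclose : ∀ᶠ x in 𝓝 x₀, |ψ x - w x| < ρ / 2 :=
    (hcont.continuousAt (hG.mem_nhds hx₀)).abs.eventually_lt_const
      (by simpa only [heq, abs_zero] using half_pos hρ)
  obtain ⟨r, hr, hball, m, hm, hsphere⟩ := exists_closedBall_subset_and_sphere_le_neg
    (inter_mem (inter_mem (hG.mem_nhds hx₀) hU) hclose)
    (hcont.mono fun x hx => hx.1.1) hstrict
  have hballG : Metric.closedBall x₀ r ⊆ G := fun x hx => (hball hx).1.1
  filter_upwards [Metric.tendstoUniformlyOn_iff.1 hu _ (lt_min (half_pos hρ) (half_pos hm))]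
    with i hi huC Q hQ
  simp only [Real.dist_eq, lt_min_iff, abs_lt] at hi
  have hψC : IsC11LocOn ψ G := isC11LocOn_of_contDiff hψ
  obtain ⟨x, hx, hxQ, hx2, hgrad, hhess⟩ :=
    (hψC.sub huC hG).exists_mem_ball_fderiv_fderiv_nonpos hG hr hballG (M := -(m / 2))
      (fun x hx => by linarith [hsphere x hx, hi x (hballG (Metric.sphere_subset_closedBall hx))])
      (by linarith [hi x₀ hx₀]) hQ hρ
  have hxball : x ∈ Metric.closedBall x₀ r := Metric.ball_subset_closedBall hx
  have hfderiv : fderiv ℝ (fun y => ψ y - u i y) =ᶠ[𝓝 x] fun y => fderiv ℝ ψ y - fderiv ℝ (u i) y :=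
    (hψC.fderiv_sub huC hG).eventuallyEq_of_mem (hG.mem_nhds (hballG hxball))
  rw [hfderiv.self_of_nhds] at hgrad
  have hψ2 : DifferentiableAt ℝ (fderiv ℝ ψ) x := differentiable_fderiv_of_contDiff_two hψ x
  have hu2 : DifferentiableAt ℝ (fderiv ℝ (u i)) x := by
    simpa only [sub_sub_cancel] using hψ2.fun_sub (hx2.congr_of_eventuallyEq hfderiv.symm)
  refine ⟨x, (hball hxball).1.2, hxQ, hu2, ?_, hgrad, fun ξ => ?_⟩
  · have hψw : |ψ x - w x| < ρ / 2 := (hball hxball).2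
    rw [abs_lt] at hψw ⊢
    have hwu := hi x (hballG hxball)
    constructor <;> linarith
  · have hξ := hhess ξ
    rw [hfderiv.fderiv_eq, fderiv_fun_sub hψ2 hu2] at hξ
    exact sub_nonpos.1 hξ

end Jensen

section Jets

variable {d : ℕ}

/-- The space of second-order jets on `ℝ^d`: a Hessian, a gradient and a value. -/
abbrev Jet (d : ℕ) : Type := (Fin d → Fin d → ℝ) × (Fin d → ℝ) × ℝ

/-- The second-order jet `(D²u(x), Du(x), u(x))`. -/
def jet (u : E d → ℝ) (x : E d) : Jet d := (D2 u x, D1 u x, u x)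

/-- The quadratic form `m_{ij} ξ^i ξ^j` of a matrix. -/
def quad (m : Fin d → Fin d → ℝ) (ξ : Fin d → ℝ) : ℝ := ∑ i, ∑ j, m i j * ξ i * ξ j

/-- The order on jets in which degenerate elliptic operators are monotone: equal values and
gradients, ordered Hessians. -/
structure JetLE (p q : Jet d) : Prop where
  quad_le : ∀ ξ, quad p.1 ξ ≤ quad q.1 ξ
  snd_eq : p.2 = q.2

/-- Degenerate ellipticity of a (generally nonlinear) second-order operator at a fixed point. -/
def DegenerateElliptic (H : Jet d → ℝ) : Prop := ∀ ⦃p q : Jet d⦄, JetLE p q → H p ≤ H q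

theorem quad_neg (m : Fin d → Fin d → ℝ) (ξ : Fin d → ℝ) : quad (-m) ξ = -quad m ξ := by
  simp only [quad, Pi.neg_apply, neg_mul, Finset.sum_neg_distrib]

theorem JetLE.neg {p q : Jet d} (h : JetLE p q) : JetLE (-q) (-p) where
  quad_le ξ := by simpa only [Prod.fst_neg, quad_neg, neg_le_neg_iff] using h.quad_le ξ
  snd_eq := congrArg Neg.neg h.snd_eq.symm

theorem D2_eq_fderiv_fderiv {u : E d → ℝ} {x : E d} (hu : DifferentiableAt ℝ (fderiv ℝ u) x)
    (i j : Fin d) :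
    D2 u x i j =
      fderiv ℝ (fderiv ℝ u) x (EuclideanSpace.single i 1) (EuclideanSpace.single j 1) := by
  simp [D2, fderiv_clm_apply hu (differentiableAt_const _)]

theorem sum_single_apply_single_mul (M : E d →L[ℝ] E d →L[ℝ] ℝ) (ξ : Fin d → ℝ) :
    ∑ i, ∑ j, M (EuclideanSpace.single i 1) (EuclideanSpace.single j 1) * ξ i * ξ j =
      M (WithLp.toLp 2 ξ) (WithLp.toLp 2 ξ) := by
  have hξ : (WithLp.toLp 2 ξ : E d) = ∑ i, ξ i • EuclideanSpace.single i (1 : ℝ) := by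
    ext k
    simp [Pi.single_apply]
  simp only [hξ, map_sum, map_smul, sum_apply, smul_apply, smul_eq_mul, Finset.mul_sum]
  rw [Finset.sum_comm]
  exact Finset.sum_congr rfl fun i _ => Finset.sum_congr rfl fun j _ => by ring

theorem quad_D2 {u : E d → ℝ} {x : E d} (hu : DifferentiableAt ℝ (fderiv ℝ u) x)
    (ξ : Fin d → ℝ) :
    quad (D2 u x) ξ = fderiv ℝ (fderiv ℝ u) x (WithLp.toLp 2 ξ) (WithLp.toLp 2 ξ) := by
  simp only [quad, D2_eq_fderiv_fderiv hu, sum_single_apply_single_mul]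

theorem dist_D1_le (u v : E d → ℝ) (x : E d) :
    dist (D1 u x) (D1 v x) ≤ ‖fderiv ℝ u x - fderiv ℝ v x‖ := by
  refine (dist_pi_le_iff (norm_nonneg _)).2 fun i => ?_
  simpa [D1, dist_eq_norm] using
    (fderiv ℝ u x - fderiv ℝ v x).le_opNorm (EuclideanSpace.single i 1)

theorem jet_neg (u : E d → ℝ) (x : E d) : jet (fun y => -u y) x = -jet u x := by
  ext <;> simp [jet, D1, D2, fderiv_fun_neg]

variable {φ θ : E d → ℝ}

theorem continuous_jet (hφ : ContDiff ℝ 2 φ) : Continuous (jet φ) := by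
  have hD1 : Continuous (fderiv ℝ φ) := hφ.continuous_fderiv two_ne_zero
  have hD2 : Continuous (fderiv ℝ (fderiv ℝ φ)) :=
    (hφ.fderiv_right (m := 1) one_add_one_eq_two.le).continuous_fderiv one_ne_zero
  refine (continuous_pi fun i => continuous_pi fun j => ?_).prodMk
    ((continuous_pi fun i => hD1.clm_apply continuous_const).prodMk hφ.continuous)
  simp only [D2_eq_fderiv_fderiv (differentiable_fderiv_of_contDiff_two hφ _)]
  exact (hD2.clm_apply continuous_const).clm_apply continuous_const

theorem jet_sub_const_mul (hφ : ContDiff ℝ 2 φ) (hθ : ContDiff ℝ 2 θ) (e : ℝ) (x : E d) :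
    jet (fun y => φ y - e * θ y) x = jet φ x - e • jet θ x := by
  have hfderiv : (fderiv ℝ fun y => φ y - e * θ y) = fun y => fderiv ℝ φ y - e • fderiv ℝ θ y := by
    funext y
    have hθy := hθ.differentiable two_ne_zero y
    rw [fderiv_fun_sub (hφ.differentiable two_ne_zero y) (hθy.const_mul e),
      fderiv_const_mul hθy]
  have hφ2 := differentiable_fderiv_of_contDiff_two hφ x
  have hθ2 := differentiable_fderiv_of_contDiff_two hθ x
  have hdiff : DifferentiableAt ℝ (fderiv ℝ fun y => φ y - e * θ y) x :=
    hfderiv ▸ hφ2.sub (hθ2.const_smul e)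
  ext i j
  · simp [jet, D2_eq_fderiv_fderiv hφ2, D2_eq_fderiv_fderiv hθ2, D2_eq_fderiv_fderiv hdiff,
      hfderiv, fderiv_fun_sub hφ2 (hθ2.fun_const_smul e), fderiv_fun_const_smul hθ2]
  · simp [jet, D1, hfderiv]
  · simp [jet]

end Jets

section Contact

variable {d : ℕ} {ι : Type*} {l : Filter ι} {u : ι → E d → ℝ} {w φ : E d → ℝ} {G : Set (E d)}
  {x₀ : E d} {N : Set (E d × Jet d)}

theorem eventually_exists_jetLE_of_strict_max (hG : IsOpen G) (hx₀ : x₀ ∈ G)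
    (hu : TendstoUniformlyOn u w l G) (hw : ContinuousOn w G) (hφ : ContDiff ℝ 2 φ)
    (hstrict : ∀ᶠ x in 𝓝[≠] x₀, φ x - w x < 0) (heq : φ x₀ - w x₀ = 0)
    (hN : N ∈ 𝓝 (x₀, jet φ x₀)) :
    ∀ᶠ i in l, IsC11LocOn (u i) G → ∀ Q : E d → Prop, (∀ᵐ x, x ∈ G → Q x) →
      ∃ x q, Q x ∧ (x, q) ∈ N ∧ JetLE q (jet (u i) x) := by
  obtain ⟨ε, hε, hball⟩ := Metric.mem_nhds_iff.1 hN
  have hU : ∀ᶠ x in 𝓝 x₀, dist (x, jet φ x) (x₀, jet φ x₀) < ε / 2 :=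
    Metric.tendsto_nhds.1 (continuous_id.prodMk (continuous_jet hφ)).continuousAt _ (half_pos hε)
  filter_upwards [eventually_exists_contact_of_strict_max (μ := volume) hG hx₀ hu hw hφ hstrict heq
    hU (half_pos hε)] with i hi huC Q hQ
  obtain ⟨x, hxU, hxQ, hu2, hvalue, hgrad, hhess⟩ := hi huC Q hQ
  let q : Jet d := (D2 φ x, D1 (u i) x, u i x)
  have hq : dist q (jet φ x) < ε / 2 := by
    rw [dist_comm]
    refine max_lt ?_ (max_lt ((dist_D1_le _ _ _).trans_lt hgrad) hvalue)
    simpa only [q, jet, dist_self] using half_pos hε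
  refine ⟨x, q, hxQ, hball ?_, fun ξ => ?_, rfl⟩
  · have hxq : dist (x, q) (x, jet φ x) < ε / 2 := dist_prod_same_left.trans_lt hq
    rw [Metric.mem_ball]
    linarith [dist_triangle (x, q) (x, jet φ x) (x₀, jet φ x₀), show dist _ _ < _ from hxU]
  · simpa only [q, jet, quad_D2 (differentiable_fderiv_of_contDiff_two hφ x), quad_D2 hu2]
      using hhess _

-- Subtracting `e ‖x - x₀‖²` makes the maximum strict; the jet at `x₀` moves by `O(e)`.
theorem eventually_exists_jetLE_of_isLocalMax (hG : IsOpen G) (hx₀ : x₀ ∈ G)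
    (hu : TendstoUniformlyOn u w l G) (hw : ContinuousOn w G) (hφ : ContDiff ℝ 2 φ)
    (hmax : IsLocalMax (fun x => φ x - w x) x₀) (heq : φ x₀ - w x₀ = 0)
    (hN : N ∈ 𝓝 (x₀, jet φ x₀)) :
    ∀ᶠ i in l, IsC11LocOn (u i) G → ∀ Q : E d → Prop, (∀ᵐ x, x ∈ G → Q x) →
      ∃ x q, Q x ∧ (x, q) ∈ N ∧ JetLE q (jet (u i) x) := by
  let θ : E d → ℝ := fun x => ‖x - x₀‖ ^ 2
  have hθ : ContDiff ℝ 2 θ := (contDiff_id.sub contDiff_const).norm_sq ℝ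
  have hjet : Tendsto (fun e : ℝ => (x₀, jet (fun y => φ y - e * θ y) x₀)) (𝓝 0)
      (𝓝 (x₀, jet φ x₀)) := by
    simp only [jet_sub_const_mul hφ hθ]
    exact Continuous.tendsto' (by fun_prop) _ _ (by simp)
  obtain ⟨e, hNe, he⟩ : ∃ e : ℝ, N ∈ 𝓝 (x₀, jet (fun y => φ y - e * θ y) x₀) ∧ 0 < e :=
    ((hjet.eventually (eventually_mem_nhds_iff.2 hN)).filter_mono nhdsWithin_le_nhds |>.and
      self_mem_nhdsWithin).exists (f := 𝓝[>] 0)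
  refine eventually_exists_jetLE_of_strict_max hG hx₀ hu hw (hφ.sub (contDiff_const.mul hθ))
    (eventually_nhdsWithin_iff.2 ?_) (by simp [θ, heq]) hNe
  filter_upwards [hmax] with x hx hne
  have hpos : 0 < e * θ x := mul_pos he (pow_pos (norm_sub_pos_iff.2 hne) 2)
  linarith

theorem eventually_exists_jetLE_of_isLocalMin (hG : IsOpen G) (hx₀ : x₀ ∈ G)
    (hu : TendstoUniformlyOn u w l G) (hw : ContinuousOn w G) (hφ : ContDiff ℝ 2 φ)
    (hmin : IsLocalMin (fun x => φ x - w x) x₀) (heq : φ x₀ - w x₀ = 0)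
    (hN : N ∈ 𝓝 (x₀, jet φ x₀)) :
    ∀ᶠ i in l, IsC11LocOn (u i) G → ∀ Q : E d → Prop, (∀ᵐ x, x ∈ G → Q x) →
      ∃ x q, Q x ∧ (x, q) ∈ N ∧ JetLE (jet (u i) x) q := by
  have hN' : (fun z : E d × Jet d => (z.1, -z.2)) ⁻¹' N ∈ 𝓝 (x₀, jet (fun x => -φ x) x₀) := by
    refine ContinuousAt.preimage_mem_nhds (by fun_prop) ?_
    simpa only [jet_neg, neg_neg] using hN
  have hmax : IsLocalMax (fun x => -φ x - -w x) x₀ := by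
    filter_upwards [hmin] with x hx
    linarith
  filter_upwards [eventually_exists_jetLE_of_isLocalMax hG hx₀ hu.fun_neg hw.neg hφ.neg hmax
    (by linarith) hN'] with i hi huC Q hQ
  obtain ⟨x, q, hxQ, hxN, hle⟩ := hi huC.neg Q hQ
  exact ⟨x, -q, hxQ, hxN, by simpa only [jet_neg, neg_neg] using hle.neg⟩

end Contact

section Stability

variable {d : ℕ} {w φ : E d → ℝ} {G : Set (E d)} {x₀ : E d} {H R : E d → Jet d → ℝ}

theorem operator_nonpos_of_isLocalMax {ι : Type*} {l : Filter ι} {u : ι → E d → ℝ}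
    (hG : IsOpen G) (hx₀ : x₀ ∈ G) (hu : TendstoUniformlyOn u w l G) (hw : ContinuousOn w G)
    (hφ : ContDiff ℝ 2 φ) (hmax : IsLocalMax (fun x => φ x - w x) x₀) (heq : φ x₀ - w x₀ = 0)
    (hH : ∀ x, DegenerateElliptic (H x))
    (hHc : ContinuousAt (fun z : E d × Jet d => H z.1 z.2) (x₀, jet φ x₀))
    (hsol : ∃ᶠ i in l, IsC11LocOn (u i) G ∧ ∀ᵐ x, x ∈ G → H x (jet (u i) x) ≤ 0) :
    H x₀ (jet φ x₀) ≤ 0 := by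
  by_contra! hpos
  obtain ⟨i, ⟨huC, hsuper⟩, hi⟩ := (hsol.and_eventually (eventually_exists_jetLE_of_isLocalMax
    hG hx₀ hu hw hφ hmax heq (hHc.eventually_const_lt hpos))).exists
  obtain ⟨x, q, hx, hq, hle⟩ := hi huC _ hsuper
  exact ((hq.trans_le (hH x hle)).trans_le hx).false

-- Near the jet of `φ` the second operator is bounded, so for large `K` its obstacle is inactive.
theorem operator_nonneg_of_isLocalMin {u : ℝ → E d → ℝ} (hG : IsOpen G) (hx₀ : x₀ ∈ G)
    (hu : TendstoUniformlyOn u w atTop G) (hw : ContinuousOn w G)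
    (hφ : ContDiff ℝ 2 φ) (hmin : IsLocalMin (fun x => φ x - w x) x₀) (heq : φ x₀ - w x₀ = 0)
    (hH : ∀ x, DegenerateElliptic (H x)) (hR : ∀ x, DegenerateElliptic (R x))
    (hHc : ContinuousAt (fun z : E d × Jet d => H z.1 z.2) (x₀, jet φ x₀))
    (hRc : ContinuousAt (fun z : E d × Jet d => R z.1 z.2) (x₀, jet φ x₀))
    (hsol : ∃ᶠ K in atTop, IsC11LocOn (u K) G ∧
      ∀ᵐ x, x ∈ G → 0 ≤ max (H x (jet (u K) x)) (R x (jet (u K) x) - K)) :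
    0 ≤ H x₀ (jet φ x₀) := by
  by_contra! hneg
  have hN := (hHc.eventually_lt_const hneg).and
    (hRc.eventually_lt_const (lt_add_one (R x₀ (jet φ x₀))))
  obtain ⟨K, ⟨huC, hsub⟩, hi, hK⟩ := (hsol.and_eventually
    ((eventually_exists_jetLE_of_isLocalMin hG hx₀ hu hw hφ hmin heq hN).and
      (eventually_ge_atTop (R x₀ (jet φ x₀) + 1)))).exists
  obtain ⟨x, q, hx, ⟨hHq, hRq⟩, hle⟩ := hi huC _ hsub
  have hHx : H x (jet (u K) x) < 0 := (hH x hle).trans_lt hHq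
  have hRx : R x (jet (u K) x) - K < 0 := by linarith [hR x hle, show R x q < _ from hRq]
  exact (hx.trans_lt (max_lt hHx hRx)).false

end Stability

section SupInf

variable {A B : Type*}

theorem iSup_iInf_le_iSup_iInf_add [Nonempty A] [Nonempty B] {h k : A × B → ℝ} {η : ℝ}
    (hh : BddBelow (range h)) (hk : BddAbove (range k)) (hle : ∀ i, h i ≤ k i + η) :
    ⨆ α, ⨅ β, h (α, β) ≤ (⨆ α, ⨅ β, k (α, β)) + η := by
  obtain ⟨m, hm⟩ := hh
  obtain ⟨M, hM⟩ := hk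
  have hh_bdd (α : A) : BddBelow (range fun β => h (α, β)) :=
    ⟨m, forall_mem_range.2 fun β => hm (mem_range_self (α, β))⟩
  have hk_bdd (α : A) : BddBelow (range fun β => k (α, β)) :=
    ⟨m - η, forall_mem_range.2 fun β => by linarith [hm (mem_range_self (α, β)), hle (α, β)]⟩
  have hinf_bdd : BddAbove (range fun α => ⨅ β, k (α, β)) :=
    ⟨M, forall_mem_range.2 fun α => (ciInf_le (hk_bdd α) (Classical.arbitrary B)).trans
      (hM (mem_range_self _))⟩
  refine ciSup_le fun α => sub_le_iff_le_add.1 ?_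
  refine le_ciSup_of_le hinf_bdd α (le_ciInf fun β => sub_le_iff_le_add.2 ?_)
  exact (ciInf_le (hh_bdd α) β).trans (hle (α, β))

theorem dist_iSup_iInf_le [Nonempty A] [Nonempty B] {h k : A × B → ℝ} {η : ℝ}
    (hh : Bornology.IsBounded (range h)) (hle : ∀ i, dist (h i) (k i) ≤ η) :
    dist (⨆ α, ⨅ β, h (α, β)) (⨆ α, ⨅ β, k (α, β)) ≤ η := by
  simp only [Real.dist_eq, abs_le] at hle ⊢
  obtain ⟨m, hm⟩ := hh.bddBelow
  obtain ⟨M, hM⟩ := hh.bddAbove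
  have hk_below : BddBelow (range k) :=
    ⟨m - η, forall_mem_range.2 fun i => by linarith [hm (mem_range_self i), (hle i).2]⟩
  have hk_above : BddAbove (range k) :=
    ⟨M + η, forall_mem_range.2 fun i => by linarith [hM (mem_range_self i), (hle i).1]⟩
  have hkh := iSup_iInf_le_iSup_iInf_add hk_below hh.bddAbove (η := η) fun i => by
    linarith [(hle i).1]
  have hhk := iSup_iInf_le_iSup_iInf_add hh.bddBelow hk_above (η := η) fun i => by
    linarith [(hle i).2]
  constructor <;> linarith

theorem continuousAt_iSup_iInf_of_equicontinuousAt [Nonempty A] [Nonempty B] {X : Type*}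
    [TopologicalSpace X] {h : A × B → X → ℝ} {x₀ : X} (hh : EquicontinuousAt h x₀)
    (hbdd : Bornology.IsBounded (range fun i => h i x₀)) :
    ContinuousAt (fun x => ⨆ α, ⨅ β, h (α, β) x) x₀ := by
  refine Metric.tendsto_nhds.2 fun ε hε => ?_
  filter_upwards [Metric.equicontinuousAt_iff_right.1 hh (ε / 2) (half_pos hε)] with x hx
  rw [dist_comm]
  exact (dist_iSup_iInf_le hbdd fun i => (hx i).le).trans_lt (half_lt_self hε)

end SupInf

theorem equicontinuousAt_comp_prodMk {I X S Y Z : Type*} [TopologicalSpace X]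
    [PseudoMetricSpace S] [ProperSpace S] [PseudoMetricSpace Y] [PseudoMetricSpace Z]
    {Θ : I → X → S} {e : S × Y → Z} {x₀ : X} (he : Continuous e) (hΘ : EquicontinuousAt Θ x₀)
    (hbdd : Bornology.IsBounded (range fun i => Θ i x₀)) (y₀ : Y) :
    EquicontinuousAt (fun i (z : X × Y) => e (Θ i z.1, z.2)) (x₀, y₀) := by
  refine Metric.equicontinuousAt_iff_right.2 fun ε hε => ?_
  obtain ⟨η, hη, hunif⟩ := Metric.mem_uniformity_dist.1
    (IsCompact.uniformContinuousAt_of_continuousAt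
      (hbdd.isCompact_closure.prod (isCompact_singleton (x := y₀))) e
      (fun _ _ => he.continuousAt) (Metric.dist_mem_uniformity hε))
  have hΘη : ∀ᶠ z : X × Y in 𝓝 (x₀, y₀), ∀ i, dist (Θ i x₀) (Θ i z.1) < η :=
    (continuous_fst.tendsto (x₀, y₀)).eventually (Metric.equicontinuousAt_iff_right.1 hΘ η hη)
  have hyη : ∀ᶠ z : X × Y in 𝓝 (x₀, y₀), z.2 ∈ Metric.ball y₀ η :=
    (continuous_snd.tendsto (x₀, y₀)).eventually (Metric.ball_mem_nhds y₀ hη)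
  filter_upwards [hΘη, hyη] with z hΘz hyz i
  refine @hunif (Θ i x₀, y₀) (Θ i z.1, z.2) (max_lt (hΘz i) ?_) ?_
  · rwa [Metric.mem_ball'] at hyz
  · exact ⟨subset_closure (mem_range_self i), rfl⟩

section Isaacs

variable {d : ℕ}

/-- The value at the jet `p` of the affine operator `a_{ij}D_{ij} + b_i D_i - c + f`, whose
coefficients are packed as `θ = ((a, b, c), f)`. -/
def affineEval (θ : Jet d × ℝ) (p : Jet d) : ℝ :=
  (∑ i, ∑ j, θ.1.1 i j * p.1 i j) + (∑ i, θ.1.2.1 i * p.2.1 i) - θ.1.2.2 * p.2.2 + θ.2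

/-- The Isaacs operator `sup_α inf_β` of the affine operators with coefficients `Θ (α, β)`. -/
def isaacs {A B : Type*} (Θ : A × B → E d → Jet d × ℝ) (x : E d) (p : Jet d) : ℝ :=
  ⨆ α, ⨅ β, affineEval (Θ (α, β) x) p

theorem continuous_affineEval :
    Continuous fun z : (Jet d × ℝ) × Jet d => affineEval z.1 z.2 := by
  unfold affineEval
  fun_prop

open scoped MatrixOrder in
theorem sum_mul_le_sum_mul_of_posSemidef {m n k : Fin d → Fin d → ℝ}
    (hm : (Matrix.of m).PosSemidef) (hle : ∀ ξ, quad n ξ ≤ quad k ξ) :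
    ∑ i, ∑ j, m i j * n i j ≤ ∑ i, ∑ j, m i j * k i j := by
  obtain ⟨B, hB⟩ := CStarAlgebra.nonneg_iff_eq_star_mul_self.mp hm.nonneg
  have hgram (i j : Fin d) : m i j = ∑ r, B r i * B r j := by
    simpa [Matrix.mul_apply, Matrix.star_apply] using congrFun (congrFun hB i) j
  have hsum (n : Fin d → Fin d → ℝ) : ∑ i, ∑ j, m i j * n i j = ∑ r, quad n (B r) := by
    simp only [quad, hgram, Finset.sum_mul]
    rw [Finset.sum_comm_cycle]
    exact Finset.sum_congr rfl fun r _ => Finset.sum_congr rfl fun i _ =>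
      Finset.sum_congr rfl fun j _ => by ring
  simpa only [hsum] using Finset.sum_le_sum fun r _ => hle (B r)

theorem degenerateElliptic_affineEval {θ : Jet d × ℝ} (hθ : (Matrix.of θ.1.1).PosSemidef) :
    DegenerateElliptic (affineEval θ) := fun p q hpq => by
  have htrace := sum_mul_le_sum_mul_of_posSemidef hθ hpq.quad_le
  simp only [affineEval, hpq.snd_eq]
  gcongr

variable {A B : Type*} {Θ : A × B → E d → Jet d × ℝ} {x : E d}

theorem isBounded_range_affineEval (hΘ : Bornology.IsBounded (range fun i => Θ i x)) (p : Jet d) :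
    Bornology.IsBounded (range fun i => affineEval (Θ i x) p) := by
  have hcont : Continuous fun θ : Jet d × ℝ => affineEval θ p :=
    continuous_affineEval.comp₂ continuous_id continuous_const
  refine (hΘ.isCompact_closure.image hcont).isBounded.subset (range_subset_iff.2 fun i => ?_)
  exact mem_image_of_mem _ (subset_closure (mem_range_self i))

variable [Nonempty A] [Nonempty B]

theorem degenerateElliptic_isaacs (hpos : ∀ i, (Matrix.of (Θ i x).1.1).PosSemidef)
    (hbdd : Bornology.IsBounded (range fun i => Θ i x)) :
    DegenerateElliptic (isaacs Θ x) := fun p q hpq => by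
  simpa only [isaacs, add_zero] using iSup_iInf_le_iSup_iInf_add
    (isBounded_range_affineEval hbdd p).bddBelow (isBounded_range_affineEval hbdd q).bddAbove
    (η := 0) fun i => by simpa only [add_zero] using degenerateElliptic_affineEval (hpos i) hpq

theorem continuousAt_isaacs (hequi : EquicontinuousAt Θ x)
    (hbdd : Bornology.IsBounded (range fun i => Θ i x)) (p : Jet d) :
    ContinuousAt (fun z : E d × Jet d => isaacs Θ z.1 z.2) (x, p) := by
  have hequi' : EquicontinuousAt (fun i (z : E d × Jet d) => affineEval (Θ i z.1) z.2) (x, p) :=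
    equicontinuousAt_comp_prodMk continuous_affineEval hequi hbdd p
  have hcont := continuousAt_iSup_iInf_of_equicontinuousAt hequi'
    (isBounded_range_affineEval hbdd p)
  exact hcont

end Isaacs

section ConvexOperator

theorem add_fderiv_le_of_convexOn {V : Type*} [NormedAddCommGroup V]
    [NormedSpace ℝ V] {Q : V → ℝ} {p v : V} (hQ : ConvexOn ℝ univ Q)
    (hdiff : DifferentiableAt ℝ Q p) : Q p + fderiv ℝ Q p v ≤ Q (p + v) := by
  let line : ℝ →ᵃ[ℝ] V := AffineMap.lineMap p (p + v)
  have hline : HasDerivAt line v 0 := by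
    simpa only [vsub_eq_sub, add_sub_cancel_left] using
      AffineMap.hasDerivAt_lineMap (a := p) (b := p + v) (x := (0 : ℝ))
  have hderiv : HasDerivAt (Q ∘ line) (fderiv ℝ Q p v) 0 :=
    hdiff.hasFDerivAt.comp_hasDerivAt_of_eq 0 hline (AffineMap.lineMap_apply_zero _ _).symm
  have hslope := (hQ.comp_affineMap line).le_slope_of_hasDerivAt (mem_univ 0) (mem_univ 1)
    zero_lt_one hderiv
  simp only [slope_def_field, Function.comp_apply, line, AffineMap.lineMap_apply_one,
    AffineMap.lineMap_apply_zero, sub_zero, div_one] at hslope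
  linarith

theorem le_add_of_convexOn_of_fderiv_nonneg {V : Type*} [NormedAddCommGroup V]
    [NormedSpace ℝ V] [FiniteDimensional ℝ V] {Q : V → ℝ} {v : V} (hQ : ConvexOn ℝ univ Q)
    (hfderiv : ∀ p, DifferentiableAt ℝ Q p → 0 ≤ fderiv ℝ Q p v) (p : V) :
    Q p ≤ Q (p + v) := by
  borelize V
  have hlip : LocallyLipschitz Q := hQ.locallyLipschitz
  have hae : ∀ᵐ p ∂(Measure.addHaar : Measure V), DifferentiableAt ℝ Q p := by
    simpa only [mem_univ, true_imp_iff] using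
      ae_differentiableAt_of_locallyLipschitzOn isOpen_univ hlip.locallyLipschitzOn
  have hclosed : IsClosed {p | Q p ≤ Q (p + v)} :=
    isClosed_le hlip.continuous (hlip.continuous.comp (continuous_add_const v))
  refine hclosed.closure_subset_iff.2 (fun p hp => ?_) (Measure.dense_of_ae hae p)
  exact (le_add_of_nonneg_right (hfderiv p hp)).trans (add_fderiv_le_of_convexOn hQ hp)

end ConvexOperator

section StandingAssumptions

variable {d : ℕ}

theorem posSemidef_of_memSdelta {δ : ℝ} {m : Fin d → Fin d → ℝ} (hδ : 0 ≤ δ)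
    (hm : memSdelta δ m) : (Matrix.of m).PosSemidef := by
  refine Matrix.posSemidef_iff_dotProduct_mulVec.2 ⟨Matrix.ext fun i j => hm.1 j i, fun ξ => ?_⟩
  have hquad : 0 ≤ ∑ i, ∑ j, m i j * ξ i * ξ j :=
    (mul_nonneg hδ (Finset.sum_nonneg fun i _ => sq_nonneg _)).trans (hm.2 ξ).1
  refine hquad.trans_eq ?_
  simp only [dotProduct, Matrix.mulVec, Matrix.of_apply, Pi.star_apply, star_trivial,
    Finset.mul_sum]
  exact Finset.sum_congr rfl fun i _ => Finset.sum_congr rfl fun j _ => by ring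

theorem norm_le_vecNorm (v : Fin d → ℝ) : ‖v‖ ≤ vecNorm v := by
  refine (pi_norm_le_iff_of_nonneg (Real.sqrt_nonneg _)).2 fun i => Real.abs_le_sqrt ?_
  exact Finset.single_le_sum (f := fun i => v i ^ 2) (fun i _ => sq_nonneg _) (Finset.mem_univ i)

theorem norm_le_matNorm (m : Fin d → Fin d → ℝ) : ‖m‖ ≤ matNorm m := by
  refine (pi_norm_le_iff_of_nonneg (Real.sqrt_nonneg _)).2 fun i => ?_
  refine (norm_le_vecNorm (m i)).trans (Real.sqrt_le_sqrt ?_)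
  exact Finset.single_le_sum (f := fun i => ∑ j, m i j ^ 2)
    (fun i _ => Finset.sum_nonneg fun j _ => sq_nonneg _) (Finset.mem_univ i)

theorem clm_apply_fst_eq_sum (T : Jet d →L[ℝ] ℝ) (n : Fin d → Fin d → ℝ) :
    T (n, 0) = ∑ i, ∑ j, T (Pi.single i (Pi.single j 1), 0, 0) * n i j := by
  have hn : ((n, 0) : Jet d) = ∑ i, ∑ j, n i j • (Pi.single i (Pi.single j 1), 0, 0) := by
    ext i j
    · simp [Prod.fst_sum, Pi.single_apply, Finset.sum_apply, Finset.sum_ite_eq, ite_apply]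
    · simp [Prod.snd_sum]
    · simp [Prod.snd_sum]
  simp only [hn, map_sum, map_smul, smul_eq_mul, mul_comm]

theorem degenerateElliptic_of_pAssump {δhat K1 : ℝ}
    {P : (Fin d → Fin d → ℝ) → (Fin d → ℝ) → ℝ → ℝ} (hδhat : 0 ≤ δhat)
    (hP : PAssump δhat K1 P) : DegenerateElliptic fun p => P p.1 p.2.1 p.2.2 := by
  obtain ⟨hconvex, -, -, hfderiv⟩ := hP
  intro p q hpq
  have hq : p + (q.1 - p.1, 0) = q :=
    Prod.ext (add_sub_cancel _ _) ((add_zero _).trans hpq.snd_eq)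
  rw [← hq]
  refine le_add_of_convexOn_of_fderiv_nonneg hconvex (fun r hr => ?_) p
  have hle := sum_mul_le_sum_mul_of_posSemidef
    (posSemidef_of_memSdelta hδhat (hfderiv r hr).1) hpq.quad_le
  simpa only [clm_apply_fst_eq_sum, Pi.sub_apply, mul_sub, Finset.sum_sub_distrib, sub_nonneg]
    using hle

theorem isC11LocOn_of_isUSol {A B : Type} {a : A → B → E d → Fin d → Fin d → ℝ}
    {b : A → B → E d → Fin d → ℝ} {c f : A → B → E d → ℝ} {G : Set (E d)} {g u : E d → ℝ}
    {P : (Fin d → Fin d → ℝ) → (Fin d → ℝ) → ℝ → ℝ} {K : ℝ}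
    (hu : IsUSol a b c f G g P K u) : IsC11LocOn u G where
  differentiableOn := hu.2.2.1
  locallyLipschitzOn_fderiv x hx := by
    obtain ⟨r, hr, -, C, hC⟩ := hu.2.2.2.1 x hx
    exact ⟨C, _, mem_nhdsWithin_of_mem_nhds (Metric.ball_mem_nhds x hr), hC⟩

variable {A B : Type}

/-- The coefficients of the Isaacs operator `F`, packed for `isaacs`. -/
def coeffs (a : A → B → E d → Fin d → Fin d → ℝ) (b : A → B → E d → Fin d → ℝ)
    (c f : A → B → E d → ℝ) (i : A × B) (x : E d) : Jet d × ℝ :=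
  ((a i.1 i.2 x, b i.1 i.2 x, c i.1 i.2 x), f i.1 i.2 x)

variable [MetricSpace A] [MetricSpace B] {δ K0 γ : ℝ} {ω : ℝ → ℝ}
  {a : A → B → E d → Fin d → Fin d → ℝ} {b : A → B → E d → Fin d → ℝ} {c f : A → B → E d → ℝ}

theorem isBounded_range_coeffs (hcoeff : CoeffAssump δ K0 γ ω a b c f) (x : E d) :
    Bornology.IsBounded (range fun i => coeffs a b c f i x) := by
  obtain ⟨-, ha, hb, hc, hf, -⟩ := hcoeff
  refine isBounded_iff_forall_norm_le.2 ⟨K0, forall_mem_range.2 fun ⟨α, β⟩ => ?_⟩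
  have hc' : ‖c α β x‖ ≤ K0 := (Real.norm_of_nonneg (hc α β x).1).trans_le (hc α β x).2
  exact max_le (max_le ((norm_le_matNorm _).trans (ha α β x))
    (max_le ((norm_le_vecNorm _).trans (hb α β x)) hc')) (hf α β x)

theorem equicontinuous_coeffs (hcoeff : CoeffAssump δ K0 γ ω a b c f) (hγ : 0 < γ)
    (hω : ContinuousAt ω 0) (hω0 : ω 0 = 0) : Equicontinuous (coeffs a b c f) := fun x => by
  obtain ⟨-, -, -, -, -, -, -, ha, hb, hc, hf⟩ := hcoeff
  let modulus (t : ℝ) : ℝ := max (K0 * t ^ γ) (K0 * ω t)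
  have hmodulus : Tendsto modulus (𝓝 0) (𝓝 0) := by
    have hcont : ContinuousAt modulus 0 :=
      ((Real.continuousAt_rpow_const 0 γ (Or.inr hγ.le)).const_mul K0).max (hω.const_mul K0)
    simpa [modulus, hω0, Real.zero_rpow hγ.ne'] using hcont.tendsto
  have hnorm : Tendsto (fun y => ‖x - y‖) (𝓝 x) (𝓝 0) :=
    Continuous.tendsto' (by fun_prop) _ _ (by simp)
  refine Metric.equicontinuousAt_of_continuity_modulus _ (hmodulus.comp hnorm) _
    (Eventually.of_forall fun y ⟨α, β⟩ => ?_)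
  have hω' {s : ℝ} (hs : s ≤ K0 * ω ‖x - y‖) : s ≤ modulus ‖x - y‖ := hs.trans (le_max_right _ _)
  rw [dist_eq_norm]
  refine max_le (max_le ?_ (max_le (hω' ?_) (hω' (hc α β x y)))) (hω' (hf α β x y))
  · exact (norm_le_matNorm _).trans ((ha α β x y).trans (le_max_left _ _))
  · exact (norm_le_vecNorm _).trans (hb α β x y)

end StandingAssumptions

theorem statement7_general {d : ℕ} {A B : Type} [Nonempty A] [Nonempty B]
    {a : A → B → E d → Fin d → Fin d → ℝ} {b : A → B → E d → Fin d → ℝ}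
    {c f : A → B → E d → ℝ} {G : Set (E d)} {g : E d → ℝ}
    {P : (Fin d → Fin d → ℝ) → (Fin d → ℝ) → ℝ → ℝ} {uK : ℝ → E d → ℝ} {w : E d → ℝ}
    (ha : ∀ α β x, (Matrix.of (a α β x)).PosSemidef)
    (hbdd : ∀ x, Bornology.IsBounded (range fun i => coeffs a b c f i x))
    (hequi : Equicontinuous (coeffs a b c f))
    (hG : IsOpen G) (hP : DegenerateElliptic fun p => P p.1 p.2.1 p.2.2)
    (hPc : Continuous fun p : Jet d => P p.1 p.2.1 p.2.2)
    (hsol : ∃ᶠ K in atTop, IsUSol a b c f G g P K (uK K))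
    (hw : TendstoUniformlyOn uK w atTop (closure G)) :
    ViscositySolution a b c f G g w := by
  have hF (x : E d) : DegenerateElliptic (isaacs (coeffs a b c f) x) :=
    degenerateElliptic_isaacs (fun i => ha i.1 i.2 x) (hbdd x)
  have hFc (x : E d) (p : Jet d) := continuousAt_isaacs (hequi x) (hbdd x) p
  have hwG : TendstoUniformlyOn uK w atTop G := hw.mono subset_closure
  have hwc : ContinuousOn w (closure G) := hw.continuousOn (hsol.mono fun K hK => hK.1)
  refine ⟨hwc, fun x hx => ?_, fun φ hφ x₀ hx₀ hmax heq => ?_, fun φ hφ x₀ hx₀ hmin heq => ?_⟩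
  · exact tendsto_nhds_unique_of_frequently_eq (hw.tendsto_at (frontier_subset_closure hx))
      tendsto_const_nhds (hsol.mono fun K hK => hK.2.1 hx)
  · refine operator_nonpos_of_isLocalMax hG hx₀ hwG (hwc.mono subset_closure)
      (contDiff_infty.1 hφ 2) hmax heq hF (hFc x₀ _)
      (hsol.mono fun K hK => ⟨isC11LocOn_of_isUSol hK, ?_⟩)
    filter_upwards [hK.2.2.2.2] with x hx hxG using (le_max_left _ _).trans (hx hxG).le
  · refine operator_nonneg_of_isLocalMin hG hx₀ hwG (hwc.mono subset_closure)
      (contDiff_infty.1 hφ 2) hmin heq hF (fun _ => hP) (hFc x₀ _)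
      (hPc.comp continuous_snd).continuousAt
      (hsol.mono fun K hK => ⟨isC11LocOn_of_isUSol hK, ?_⟩)
    filter_upwards [hK.2.2.2.2] with x hx hxG using (hx hxG).ge

/-- **Theorem 2.5 (ii), existence part.** The function `w = lim_{K→∞} u_K` is a
viscosity solution of `F[w] = 0` in `G` with `w = g` on `∂G`. -/
theorem statement7 {d : ℕ} {A B : Type} [MetricSpace A] [MetricSpace B]
    (δ K0 χ γ δhat K1 : ℝ) (ω : ℝ → ℝ)
    (a : A → B → E d → Fin d → Fin d → ℝ) (b : A → B → E d → Fin d → ℝ)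
    (c f : A → B → E d → ℝ) (G : Set (E d)) (g : E d → ℝ)
    (P : (Fin d → Fin d → ℝ) → (Fin d → ℝ) → ℝ → ℝ)
    (hset : Setting δ K0 χ γ δhat K1 ω a b c f G g P)
    (hmod : ModulusAssump χ ω)
    (uK vK : ℝ → E d → ℝ)
    (hsol : ∀ K : ℝ, 0 ≤ K →
      IsUSol a b c f G g P K (uK K) ∧ IsVSol a b c f G g P K (vK K))
    (w : E d → ℝ)
    (hw : TendstoUniformlyOn (fun K => uK K) w Filter.atTop (closure G)) :
    ViscositySolution a b c f G g w := by
  obtain ⟨-, hδ, -, -, -, hχ1, hγ, hδhat, -, -, hA, hB, -, -, hcoeff, hG, -, hP⟩ := hset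
  obtain ⟨hω, -, hω0, -⟩ := hmod
  have hγpos : 0 < γ := hγ ▸ div_pos (by linarith) (by linarith)
  have hPc : Continuous fun p : Jet d => P p.1 p.2.1 p.2.2 :=
    let ⟨_, hLip⟩ := hP.2.2.1
    hLip.continuous
  exact statement7_general (fun α β x => posSemidef_of_memSdelta hδ.le (hcoeff.1 α β x))
    (isBounded_range_coeffs hcoeff) (equicontinuous_coeffs hcoeff hγpos hω.continuousAt hω0)
    hG.1 (degenerateElliptic_of_pAssump hδhat.le hP) hPc
    ((eventually_ge_atTop 0).frequently.mono fun K hK => (hsol K hK).1) hw
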